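/- Let x ∈ ℝ^n be such that ∇h(x) has full column rank, let Q(x) be symmetric positive definite, B(x) = (∇h(x)^T Q^{-1}(x)∇h(x))^{-1}∇h(x)^T Q^{-1}(x), and let v = Ψ_Q(x) = −∇h(x)A(x)h(x) − Q^{-1}(x)∇f(x) + Q^{-1}(x)∇h(x)B(x)∇f(x). Then (Q^{-1}(x)∇f(x) + v)^T Q(x) v = ((∇h(x)A(x)h(x))^T Q(x) ∇h(x)A(x) + ∇f(x)^T ∇h(x)A(x) − 2(∇h(x)B(x)∇f(x))^T ∇h(x)A(x)) h(x); consequently |(Q^{-1}(x)∇f(x) + v)^T Q(x) v| ≤ ‖(∇h(x)A(x)h(x))^T Q(x)∇h(x)A(x) + ∇f(x)^T∇h(x)A(x) − 2(∇h(x)B(x)∇f(x))^T∇h(x)A(x)‖ · ‖h(x)‖. -/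

import Mathlib

/- STATEMENT 19: for x with ∇h(x) of full column rank, Q(x) symmetric positive definite
(with inverse Qinv), B(x) = (∇h(x)ᵀQ⁻¹∇h(x))⁻¹∇h(x)ᵀQ⁻¹, and
v = Ψ_Q(x) = −∇h(x)A(x)h(x) − Q⁻¹∇f(x) + Q⁻¹∇h(x)B(x)∇f(x), one has
(Q⁻¹∇f(x) + v)ᵀQv = ((∇h(x)A(x)h(x))ᵀQ∇h(x)A(x) + ∇f(x)ᵀ∇h(x)A(x)
  − 2(∇h(x)B(x)∇f(x))ᵀ∇h(x)A(x)) h(x),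
hence |(Q⁻¹∇f(x) + v)ᵀQv| is at most the norm of that (row-vector) coefficient times
‖h(x)‖.  The row vector rᵀ = uᵀ∇h(x)A(x) with
u = Q∇h(x)A(x)h(x) + ∇f(x) − 2∇h(x)B(x)∇f(x) corresponds to the vector
r = (∇h(x)A(x))ᵀ u, so the identity reads ⟨Q⁻¹∇f(x) + v, Qv⟩ = ⟨r, h(x)⟩ and the bound
|⟨Q⁻¹∇f(x) + v, Qv⟩| ≤ ‖r‖·‖h(x)‖. -/

open scoped RealInnerProductSpace
open ContinuousLinearMap

noncomputable section

theorem stmt_19 {n nh : ℕ}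
    (f : EuclideanSpace ℝ (Fin n) → ℝ)
    (h : EuclideanSpace ℝ (Fin n) → EuclideanSpace ℝ (Fin nh))
    (Dh : EuclideanSpace ℝ (Fin n) → (EuclideanSpace ℝ (Fin n) →L[ℝ] EuclideanSpace ℝ (Fin nh)))
    (A : EuclideanSpace ℝ (Fin n) → (EuclideanSpace ℝ (Fin nh) →L[ℝ] EuclideanSpace ℝ (Fin nh)))
    (hf : ContDiff ℝ 1 f) (hh : ContDiff ℝ 1 h)
    (hDh : ∀ y, HasFDerivAt h (Dh y) y)
    (x : EuclideanSpace ℝ (Fin n))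
    (hfull : Function.Surjective (Dh x))
    (Q Qinv : EuclideanSpace ℝ (Fin n) →L[ℝ] EuclideanSpace ℝ (Fin n))
    (hQsym : IsSelfAdjoint Q)
    (hQpos : ∀ w : EuclideanSpace ℝ (Fin n), w ≠ 0 → 0 < ⟪w, Q w⟫)
    (hQinv₁ : ∀ w, Q (Qinv w) = w) (hQinv₂ : ∀ w, Qinv (Q w) = w)
    (Sinv : EuclideanSpace ℝ (Fin nh) →L[ℝ] EuclideanSpace ℝ (Fin nh))
    (hSinv₁ : ∀ w, ((Dh x) ∘L Qinv ∘L (ContinuousLinearMap.adjoint (Dh x))) (Sinv w) = w)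
    (hSinv₂ : ∀ w, Sinv (((Dh x) ∘L Qinv ∘L (ContinuousLinearMap.adjoint (Dh x))) w) = w) :
    -- B(x) = (∇h(x)ᵀ Q⁻¹(x) ∇h(x))⁻¹ ∇h(x)ᵀ Q⁻¹(x)
    let B : EuclideanSpace ℝ (Fin n) →L[ℝ] EuclideanSpace ℝ (Fin nh) :=
      Sinv ∘L (Dh x) ∘L Qinv
    -- v = Ψ_Q(x)
    let v : EuclideanSpace ℝ (Fin n) :=
      -(ContinuousLinearMap.adjoint (Dh x)) (A x (h x)) - Qinv (gradient f x) +
        Qinv ((ContinuousLinearMap.adjoint (Dh x)) (B (gradient f x)))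
    -- r = (∇h(x)A(x))ᵀ (Q∇h(x)A(x)h(x) + ∇f(x) − 2∇h(x)B(x)∇f(x))
    let r : EuclideanSpace ℝ (Fin nh) :=
      (ContinuousLinearMap.adjoint ((ContinuousLinearMap.adjoint (Dh x)) ∘L (A x)))
        (Q ((ContinuousLinearMap.adjoint (Dh x)) (A x (h x))) + gradient f x -
          (2 : ℝ) • ((ContinuousLinearMap.adjoint (Dh x)) (B (gradient f x))))
    ⟪Qinv (gradient f x) + v, Q v⟫ = ⟪r, h x⟫ ∧
      |⟪Qinv (gradient f x) + v, Q v⟫| ≤ ‖r‖ * ‖h x‖ := by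
  intro B v r
  have hQ (a b) : ⟪Q a, b⟫ = ⟪a, Q b⟫ := hQsym.isSymmetric a b
  have hQinv (a b) : ⟪Qinv a, b⟫ = ⟪a, Qinv b⟫ := by
    rw [← hQinv₁ b, ← hQ, hQinv₁, hQinv₂]
  set g := gradient f x
  set p := adjoint (Dh x) (A x (h x))
  set q := adjoint (Dh x) (B g) with hq
  have hDq : Dh x (Qinv q) = Dh x (Qinv g) := hSinv₁ (Dh x (Qinv g))
  have horth : ⟪Qinv q, g⟫ = ⟪Qinv q, q⟫ := by
    rw [hQinv, hQinv]
    nth_rewrite 1 3 [hq]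
    rw [adjoint_inner_left, adjoint_inner_left, hDq]
  have hleft : Qinv g + v = Qinv q - p := by
    simp only [v]
    abel
  have hright : Q v = q - g - Q p := by
    simp only [v, map_add, map_sub, map_neg, hQinv₁]
    abel
  have hcross : ⟪Qinv q, Q p⟫ = ⟪q, p⟫ := by rw [hQinv, hQinv₂]
  have hr : ⟪r, h x⟫ = ⟪Q p + g - (2 : ℝ) • q, p⟫ :=
    adjoint_inner_left _ _ _
  have key : ⟪Qinv g + v, Q v⟫ = ⟪r, h x⟫ := by
    rw [hleft, hright, hr]
    simp only [inner_sub_left, inner_sub_right, inner_add_left, inner_smul_left, hcross, horth,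
      hQ, real_inner_comm q p, real_inner_comm g p, conj_trivial]
    ring
  exact ⟨key, key ▸ abs_real_inner_le_norm r (h x)⟩
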